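/- Let Δ > δ ≥ 1 be integers and let G be a finite simple graph with n vertices, m edges, maximum degree at most Δ, and minimum degree at least δ. Let x and y be real numbers (x may be negative) and let z_δ, z_{δ+1}, ..., z_Δ be nonnegative real numbers such that z_i + z_j ≥ j − i for all integers δ ≤ i < j ≤ Δ and x + i·y ≥ i·z_i for all integers δ ≤ i ≤ Δ. Then irr(G) ≤ n·x + 2m·y. -/

import Mathlib

open Finset SimpleGraph

/-- The irregularity of a graph: `irr G = ∑_{uv ∈ E(G)} |d_G(u) - d_G(v)|`. -/
def irr {V : Type*} [Fintype V] (G : SimpleGraph V) [DecidableRel G.Adj] : ℤ :=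
  ∑ e ∈ G.edgeFinset, Sym2.lift ⟨fun u v => |(G.degree u : ℤ) - (G.degree v : ℤ)|,
    fun u v => by simp [abs_sub_comm]⟩ e

/-!
Give each vertex `v` the weight `f v = z (d v)`. The constraints on `z` say that every edge costs at
most the sum of the weights of its ends, so summing over the edges bounds `irr G` by `∑ d v * f v`,
in which each vertex is counted once per incident edge. The constraint `i * z i ≤ x + i * y` bounds
the term of `v` by `x + d v * y`, and by the handshake lemma these add up to `n * x + 2 * m * y`.
-/

theorem abs_natCast_sub_le_add_of_forall_lt {R : Type*} [Ring R] [LinearOrder R]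
    [IsStrictOrderedRing R] {S : Set ℕ} {z : ℕ → R} (hz : ∀ i ∈ S, 0 ≤ z i)
    (hzz : ∀ i ∈ S, ∀ j ∈ S, i < j → (j : R) - i ≤ z i + z j) {i j : ℕ} (hi : i ∈ S)
    (hj : j ∈ S) : |(i : R) - j| ≤ z i + z j := by
  wlog hij : i ≤ j generalizing i j
  · rw [abs_sub_comm, add_comm]
    exact this hj hi (le_of_not_ge hij)
  rcases hij.eq_or_lt with rfl | hlt
  · simpa using add_nonneg (hz i hi) (hz i hi)
  · rw [abs_sub_comm, abs_of_nonneg (sub_nonneg.2 (Nat.cast_le.2 hij))]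
    exact hzz i hi j hj hlt

section

variable {V : Type*} [Fintype V] (G : SimpleGraph V) [DecidableRel G.Adj]

theorem sum_edgeFinset_sum_toFinset [DecidableEq V] {M : Type*} [AddCommMonoid M] (f : V → M) :
    ∑ e ∈ G.edgeFinset, ∑ v ∈ e.toFinset, f v = ∑ v, G.degree v • f v := by
  calc ∑ e ∈ G.edgeFinset, ∑ v ∈ e.toFinset, f v
      = ∑ v, ∑ _e ∈ G.incidenceFinset v, f v :=
        sum_comm' fun e v => by simp [incidenceFinset_eq_filter]
    _ = ∑ v, G.degree v • f v := by
        simp only [sum_const, card_incidenceFinset_eq_degree]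

theorem sum_add_degree_mul {R : Type*} [Semiring R] (x y : R) :
    ∑ v, (x + (G.degree v : R) * y) = Fintype.card V * x + 2 * (#G.edgeFinset : R) * y := by
  have handshake : ∑ v, (G.degree v : R) = 2 * (#G.edgeFinset : R) := by
    rw [← Nat.cast_sum, G.sum_degrees_eq_twice_card_edges, Nat.cast_mul, Nat.cast_ofNat]
  rw [sum_add_distrib, ← sum_mul, handshake, sum_const, nsmul_eq_mul, card_univ]

variable {R : Type*} [Ring R] [LinearOrder R] [IsStrictOrderedRing R]

theorem irr_le_sum_degree_mul {f : V → R}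
    (hf : ∀ u v, G.Adj u v → |(G.degree u : R) - G.degree v| ≤ f u + f v) :
    (irr G : R) ≤ ∑ v, (G.degree v : R) * f v := by
  classical
  simp only [← nsmul_eq_mul, ← sum_edgeFinset_sum_toFinset, irr, Int.cast_sum]
  refine sum_le_sum fun e he => ?_
  induction e using Sym2.ind with
  | _ u v =>
    have huv : G.Adj u v := by simpa only [mem_edgeFinset, mem_edgeSet] using he
    rw [Sym2.toFinset_mk_eq, sum_pair huv.ne]
    simpa using hf u v huv

theorem stmt_7_general {x y : R} {f : V → R}
    (hf : ∀ u v, G.Adj u v → |(G.degree u : R) - G.degree v| ≤ f u + f v)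
    (hxy : ∀ v, (G.degree v : R) * f v ≤ x + G.degree v * y) :
    (irr G : R) ≤ Fintype.card V * x + 2 * (#G.edgeFinset : R) * y :=
  calc (irr G : R) ≤ ∑ v, (G.degree v : R) * f v := irr_le_sum_degree_mul G hf
    _ ≤ ∑ v, (x + (G.degree v : R) * y) := sum_le_sum fun v _ => hxy v
    _ = Fintype.card V * x + 2 * (#G.edgeFinset : R) * y := sum_add_degree_mul G x y

end

theorem stmt_7 {V : Type*} [Fintype V] (G : SimpleGraph V) [DecidableRel G.Adj]
    (Δ δ : ℕ) (hδ : 1 ≤ δ) (hδΔ : δ < Δ)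
    (hmax : ∀ v : V, G.degree v ≤ Δ)
    (hmin : ∀ v : V, δ ≤ G.degree v)
    (x y : ℝ) (z : ℕ → ℝ)
    (hz : ∀ i : ℕ, δ ≤ i → i ≤ Δ → 0 ≤ z i)
    (hzz : ∀ i j : ℕ, δ ≤ i → i < j → j ≤ Δ → z i + z j ≥ (j : ℝ) - i)
    (hxy : ∀ i : ℕ, δ ≤ i → i ≤ Δ → x + (i : ℝ) * y ≥ (i : ℝ) * z i) :
    (irr G : ℝ) ≤ (Fintype.card V : ℝ) * x + 2 * (G.edgeFinset.card : ℝ) * y := by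
  have edge_bound (u v : V) : |(G.degree u : ℝ) - G.degree v| ≤ z (G.degree u) + z (G.degree v) :=
    abs_natCast_sub_le_add_of_forall_lt (S := Set.Icc δ Δ) (fun i hi => hz i hi.1 hi.2)
      (fun i hi j hj hij => hzz i j hi.1 hij hj.2) ⟨hmin u, hmax u⟩ ⟨hmin v, hmax v⟩
  exact stmt_7_general G (fun u v _ => edge_bound u v) fun v => hxy _ (hmin v) (hmax v)
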